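/- Let δ ∈ [4/7, 1) and let A ∈ ℝ^{m×4} be any matrix with AᵀA = G, where G is the 4×4 matrix with unit diagonal, G₁ⱼ = Gⱼ₁ = δ/2 for j ∈ {2,3,4}, and G_{jk} = −δ/8 for distinct j, k ∈ {2,3,4} (such A exists since G is positive semidefinite). Then: (a) every column of A has unit ℓ₂-norm; (b) A satisfies the RIP of order 4 with constant δ, and every δ' ∈ [0,1) with which A satisfies the RIP of order 4 satisfies δ' ≥ δ; and (c) for the 3-sparse vector x = (0, 1, 1, 1)ᵀ and y = A x, one has |⟨y, a_1⟩| = 3δ/2, |⟨y, a_j⟩| = 1 − δ/4 for j ∈ {2,3,4}, and 3δ/2 ≥ 1 − δ/4, so the incorrect index 1 attains the maximum of j ↦ |⟨y, a_j⟩|. -/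

import Mathlib

open Finset

noncomputable section

/-- The support of a vector as a `Finset`. -/
def vsupp {n : ℕ} (x : Fin n → ℝ) : Finset (Fin n) :=
  Finset.univ.filter (fun i => x i ≠ 0)

/-- `A` satisfies the restricted isometry property of order `r` with constant `δ`. -/
def RIP {m n : ℕ} (A : Matrix (Fin m) (Fin n) ℝ) (r : ℕ) (δ : ℝ) : Prop :=
  ∀ x : Fin n → ℝ, (vsupp x).card ≤ r →
    (1 - δ) * (∑ i, x i ^ 2) ≤ (∑ i, (A.mulVec x) i ^ 2) ∧
      (∑ i, (A.mulVec x) i ^ 2) ≤ (1 + δ) * (∑ i, x i ^ 2)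

/-- The `j`-th column of `A`. -/
def col {m n : ℕ} (A : Matrix (Fin m) (Fin n) ℝ) (j : Fin n) : Fin m → ℝ :=
  fun i => A i j

/-- Euclidean dot product. -/
def dot {m : ℕ} (u v : Fin m → ℝ) : ℝ := ∑ i, u i * v i

/-- Squared Euclidean norm. -/
def nsq {m : ℕ} (v : Fin m → ℝ) : ℝ := ∑ i, v i ^ 2

/-- Euclidean norm. -/
def enorm {m : ℕ} (v : Fin m → ℝ) : ℝ := Real.sqrt (nsq v)

/-- Squared norm of the restriction of `x` to `T`. -/
def rsq {n : ℕ} (x : Fin n → ℝ) (T : Finset (Fin n)) : ℝ := ∑ i ∈ T, x i ^ 2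

/-- Norm of the restriction of `x` to `T`. -/
def rnorm {n : ℕ} (x : Fin n → ℝ) (T : Finset (Fin n)) : ℝ := Real.sqrt (rsq x T)

/-- Span of the columns of `A` indexed by `J`. -/
def colSpan {m n : ℕ} (A : Matrix (Fin m) (Fin n) ℝ) (J : Finset (Fin n)) :
    Submodule ℝ (EuclideanSpace ℝ (Fin m)) :=
  Submodule.span ℝ ((fun j => (WithLp.equiv 2 (Fin m → ℝ)).symm (col A j)) '' (J : Set (Fin n)))

/-- The projection `P_J^⊥ v` of `v` onto the orthogonal complement of the span of the
columns of `A` indexed by `J`. -/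
def projPerp {m n : ℕ} (A : Matrix (Fin m) (Fin n) ℝ) (J : Finset (Fin n)) (v : Fin m → ℝ) :
    Fin m → ℝ :=
  v - WithLp.equiv 2 (Fin m → ℝ)
    ((Submodule.orthogonalProjection (colSpan A J) ((WithLp.equiv 2 (Fin m → ℝ)).symm v) :
      EuclideanSpace ℝ (Fin m)))

/-- The OLS selection criterion value for index `j`, given measurements `y` and current
estimated support `Sk`. -/
def olsQuot {m n : ℕ} (A : Matrix (Fin m) (Fin n) ℝ) (y : Fin m → ℝ) (Sk : Finset (Fin n))
    (j : Fin n) : ℝ :=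
  |dot (projPerp A Sk y) (col A j)| / _root_.enorm (projPerp A Sk (col A j))

/-- The estimated support of OLS after `k` iterations (ties broken towards smaller index). -/
def olsSupp {m n : ℕ} (A : Matrix (Fin m) (Fin n) ℝ) (y : Fin m → ℝ) : ℕ → Finset (Fin n)
  | 0 => ∅
  | k + 1 =>
    let Sk := olsSupp A y k
    let cand := (Finset.univ \ Sk).filter
      (fun j => ∀ i ∈ Finset.univ \ Sk, olsQuot A y Sk i ≤ olsQuot A y Sk j)
    if h : cand.Nonempty then insert (cand.min' h) Sk else Sk

/-- The constant `C_K` from the paper. -/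
def CK (K : ℕ) : ℝ :=
  if K = 1 then 1 else if K = 2 then 2/3 else if K = 3 then 4/7 else 1 / Real.sqrt K

/-! The Gram matrix is `1 + δ • E`, where the symmetric matrix `E` has the eigenvalues
`-1, 1/8, 1/8, 3/4`. Since the RIP of full order says that every eigenvalue of `AᵀA - 1` has
absolute value at most the constant, the eigenvalue `-1` of `E`, with eigenvector `(-3, 2, 2, 2)`,
makes `δ` the optimal constant. The correlations `⟨A x, a_j⟩` are the entries of
`AᵀA x = x + δ • E x`, and for `x = (0, 1, 1, 1)` the first entry catches up with the others exactly
when `3δ/2 = 1 - δ/4`, that is, at `δ = 4/7`. -/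

section

open scoped Matrix

variable {m n r : ℕ} {A : Matrix (Fin m) (Fin n) ℝ} {δ : ℝ}

lemma card_vsupp_le (x : Fin n → ℝ) : (vsupp x).card ≤ n :=
  card_finset_fin_le _

lemma nsq_eq_dotProduct (v : Fin n → ℝ) : nsq v = v ⬝ᵥ v := by
  simp only [nsq, dotProduct, sq]

lemma nsq_col (A : Matrix (Fin m) (Fin n) ℝ) (j : Fin n) : nsq (col A j) = (Aᵀ * A) j j :=
  nsq_eq_dotProduct _

lemma nsq_mulVec (A : Matrix (Fin m) (Fin n) ℝ) (x : Fin n → ℝ) :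
    nsq (A *ᵥ x) = x ⬝ᵥ (Aᵀ * A) *ᵥ x := by
  rw [nsq_eq_dotProduct, ← Matrix.mulVec_mulVec, Matrix.dotProduct_transpose_mulVec]

lemma dot_mulVec_col (A : Matrix (Fin m) (Fin n) ℝ) (x : Fin n → ℝ) (j : Fin n) :
    dot (A *ᵥ x) (col A j) = ((Aᵀ * A) *ᵥ x) j := by
  rw [← Matrix.mulVec_mulVec]
  exact dotProduct_comm _ _

lemma dot_mulVec_col_of_gram_sub_one_eq_smul {E : Matrix (Fin n) (Fin n) ℝ}
    (hE : Aᵀ * A - 1 = δ • E) (x : Fin n → ℝ) (j : Fin n) :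
    dot (A *ᵥ x) (col A j) = x j + δ * (E *ᵥ x) j := by
  rw [dot_mulVec_col, sub_eq_iff_eq_add'.mp hE, Matrix.add_mulVec, Matrix.one_mulVec,
    Matrix.smul_mulVec, Pi.add_apply, Pi.smul_apply, smul_eq_mul]

lemma rip_iff_abs_dotProduct_gram_sub_one_le :
    RIP A r δ ↔ ∀ x : Fin n → ℝ, (vsupp x).card ≤ r →
      |x ⬝ᵥ (Aᵀ * A - 1) *ᵥ x| ≤ δ * (x ⬝ᵥ x) := by
  refine forall₂_congr fun x _ => ?_
  change (1 - δ) * nsq x ≤ nsq (A *ᵥ x) ∧ nsq (A *ᵥ x) ≤ (1 + δ) * nsq x ↔ _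
  rw [nsq_mulVec, nsq_eq_dotProduct, Matrix.sub_mulVec, Matrix.one_mulVec, dotProduct_sub, abs_le]
  constructor <;> rintro ⟨hlower, hupper⟩ <;> constructor <;> linarith

lemma rip_of_gram_sub_one_eq_smul (hδ : 0 ≤ δ) {E : Matrix (Fin n) (Fin n) ℝ}
    (hE : Aᵀ * A - 1 = δ • E) (hbound : ∀ x, |x ⬝ᵥ E *ᵥ x| ≤ x ⬝ᵥ x) : RIP A r δ := by
  refine rip_iff_abs_dotProduct_gram_sub_one_le.mpr fun x _ => ?_
  rw [hE, Matrix.smul_mulVec, dotProduct_smul, smul_eq_mul, abs_mul, abs_of_nonneg hδ]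
  exact mul_le_mul_of_nonneg_left (hbound x) hδ

lemma RIP.abs_le_of_gram_sub_one_mulVec_eq_smul (h : RIP A r δ) {v : Fin n → ℝ} {μ : ℝ}
    (hv : v ≠ 0) (hcard : (vsupp v).card ≤ r) (heig : (Aᵀ * A - 1) *ᵥ v = μ • v) : |μ| ≤ δ := by
  have hnonneg : 0 ≤ v ⬝ᵥ v := nsq_eq_dotProduct v ▸ sum_nonneg fun i _ => sq_nonneg (v i)
  have hpos : 0 < v ⬝ᵥ v := hnonneg.lt_of_ne' (dotProduct_self_eq_zero.not.mpr hv)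
  have hquad := rip_iff_abs_dotProduct_gram_sub_one_le.mp h v hcard
  rw [heig, dotProduct_smul, smul_eq_mul, abs_mul, abs_of_pos hpos] at hquad
  exact le_of_mul_le_mul_right hquad hpos

/-- The direction `E` in which the Gram matrix `1 + δ • E` of the counterexample departs from the
identity; it does not depend on `δ`. -/
def gramDeviation : Matrix (Fin 4) (Fin 4) ℝ :=
  !![0, 1 / 2, 1 / 2, 1 / 2;
     1 / 2, 0, -(1 / 8), -(1 / 8);
     1 / 2, -(1 / 8), 0, -(1 / 8);
     1 / 2, -(1 / 8), -(1 / 8), 0]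

lemma gram_sub_one_eq_smul_gramDeviation (δ : ℝ) :
    !![1, δ / 2, δ / 2, δ / 2;
       δ / 2, 1, -(δ / 8), -(δ / 8);
       δ / 2, -(δ / 8), 1, -(δ / 8);
       δ / 2, -(δ / 8), -(δ / 8), 1] - 1 = δ • gramDeviation := by
  ext i j
  fin_cases i <;> fin_cases j <;> simp [gramDeviation] <;> ring

lemma gramDeviation_mulVec_eq_neg_self :
    gramDeviation *ᵥ ![-3, 2, 2, 2] = -![-3, 2, 2, 2] := by
  ext i
  fin_cases i <;> simp [gramDeviation, Matrix.mulVec, dotProduct, Fin.sum_univ_four] <;> norm_num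

lemma gramDeviation_mulVec_zero_one_one_one :
    gramDeviation *ᵥ ![0, 1, 1, 1] = ![3 / 2, -(1 / 4), -(1 / 4), -(1 / 4)] := by
  ext i
  fin_cases i <;> simp [gramDeviation, Matrix.mulVec, dotProduct, Fin.sum_univ_four] <;> norm_num

lemma dotProduct_gramDeviation_mulVec (x : Fin 4 → ℝ) :
    x ⬝ᵥ gramDeviation *ᵥ x =
      x 0 * (x 1 + x 2 + x 3) - (x 1 * x 2 + x 1 * x 3 + x 2 * x 3) / 4 := by
  simp only [gramDeviation, Matrix.mulVec, dotProduct, Fin.sum_univ_four, Matrix.of_apply,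
    Matrix.cons_val]
  ring

lemma abs_dotProduct_gramDeviation_mulVec_le (x : Fin 4 → ℝ) :
    |x ⬝ᵥ gramDeviation *ᵥ x| ≤ x ⬝ᵥ x := by
  have hself : x ⬝ᵥ x = x 0 ^ 2 + x 1 ^ 2 + x 2 ^ 2 + x 3 ^ 2 := by
    rw [← nsq_eq_dotProduct, nsq, Fin.sum_univ_four]
  have hplus : x ⬝ᵥ x + x ⬝ᵥ gramDeviation *ᵥ x = (x 0 + (x 1 + x 2 + x 3) / 2) ^ 2
      + 3 / 8 * ((x 1 - x 2) ^ 2 + (x 1 - x 3) ^ 2 + (x 2 - x 3) ^ 2) := by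
    rw [hself, dotProduct_gramDeviation_mulVec]
    ring
  have hminus : x ⬝ᵥ x - x ⬝ᵥ gramDeviation *ᵥ x = (x 0 - (x 1 + x 2 + x 3) / 2) ^ 2
      + 1 / 8 * ((x 1 - x 2) ^ 2 + (x 1 - x 3) ^ 2 + (x 2 - x 3) ^ 2)
      + 1 / 2 * (x 1 ^ 2 + x 2 ^ 2 + x 3 ^ 2) := by
    rw [hself, dotProduct_gramDeviation_mulVec]
    ring
  have hplus_nonneg : 0 ≤ x ⬝ᵥ x + x ⬝ᵥ gramDeviation *ᵥ x := by rw [hplus]; positivity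
  have hminus_nonneg : 0 ≤ x ⬝ᵥ x - x ⬝ᵥ gramDeviation *ᵥ x := by rw [hminus]; positivity
  exact abs_le.mpr ⟨by linarith, by linarith⟩

lemma dot_mulVec_zero_one_one_one_col {A : Matrix (Fin m) (Fin 4) ℝ}
    (hE : Aᵀ * A - 1 = δ • gramDeviation) (j : Fin 4) :
    dot (A *ᵥ ![0, 1, 1, 1]) (col A j) = if j = 0 then 3 * δ / 2 else 1 - δ / 4 := by
  rw [dot_mulVec_col_of_gram_sub_one_eq_smul hE, gramDeviation_mulVec_zero_one_one_one]
  fin_cases j <;> simp <;> ring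

lemma RIP.le_of_gram_sub_one_eq_smul_gramDeviation {A : Matrix (Fin m) (Fin 4) ℝ} {δ' : ℝ}
    (h : RIP A 4 δ') (hE : Aᵀ * A - 1 = δ • gramDeviation) : δ ≤ δ' := by
  have heig : (Aᵀ * A - 1) *ᵥ ![-3, 2, 2, 2] = (-δ) • ![-3, 2, 2, 2] := by
    rw [hE, Matrix.smul_mulVec, gramDeviation_mulVec_eq_neg_self, smul_neg, neg_smul]
  calc δ ≤ |-δ| := (le_abs_self δ).trans_eq (abs_neg δ).symm
    _ ≤ δ' := h.abs_le_of_gram_sub_one_mulVec_eq_smul (by simp) (card_vsupp_le _) heig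

end

/-- the `K = 3` counterexample. -/
theorem stmt14 {m : ℕ} (δ : ℝ) (hδ1 : 4 / 7 ≤ δ) (hδ2 : δ < 1)
    (A : Matrix (Fin m) (Fin 4) ℝ)
    (hA : A.transpose * A = !![1, δ/2, δ/2, δ/2;
                      δ/2, 1, -(δ/8), -(δ/8);
                      δ/2, -(δ/8), 1, -(δ/8);
                      δ/2, -(δ/8), -(δ/8), 1])
    (x : Fin 4 → ℝ) (hx : x = ![0, 1, 1, 1])
    (y : Fin m → ℝ) (hy : y = A.mulVec x) :
    (∀ j, nsq (col A j) = 1) ∧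
    RIP A 4 δ ∧
    (∀ δ' : ℝ, 0 ≤ δ' → δ' < 1 → RIP A 4 δ' → δ ≤ δ') ∧
    |dot y (col A 0)| = 3 * δ / 2 ∧
    (∀ j, j ≠ 0 → |dot y (col A j)| = 1 - δ / 4) ∧
    1 - δ / 4 ≤ 3 * δ / 2 ∧
    (∀ j, |dot y (col A j)| ≤ |dot y (col A 0)|) := by
  have hE : A.transpose * A - 1 = δ • gramDeviation :=
    hA ▸ gram_sub_one_eq_smul_gramDeviation δ
  have hcorr (j : Fin 4) : dot y (col A j) = if j = 0 then 3 * δ / 2 else 1 - δ / 4 := by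
    rw [hy, hx, dot_mulVec_zero_one_one_one_col hE]
  have hwrong : |dot y (col A 0)| = 3 * δ / 2 := by
    rw [hcorr, if_pos rfl, abs_of_nonneg (by linarith)]
  have hright (j : Fin 4) (hj : j ≠ 0) : |dot y (col A j)| = 1 - δ / 4 := by
    rw [hcorr, if_neg hj, abs_of_nonneg (by linarith)]
  have hle : 1 - δ / 4 ≤ 3 * δ / 2 := by linarith
  refine ⟨fun j => ?_, ?_, fun δ' _ _ h => h.le_of_gram_sub_one_eq_smul_gramDeviation hE,
    hwrong, hright, hle, fun j => ?_⟩
  · rw [nsq_col, hA]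
    fin_cases j <;> rfl
  · exact rip_of_gram_sub_one_eq_smul (by linarith) hE abs_dotProduct_gramDeviation_mulVec_le
  · rcases eq_or_ne j 0 with rfl | hj
    · exact le_rfl
    · rwa [hright j hj, hwrong]
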